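/- arXiv:2503.12241 — 2 statements merged into one kernel-verified Lean document; each statement's English description precedes it below -/
import Mathlib

section
/- Let S = ⟨a_1, …, a_k⟩ be a numerical semigroup with minimal generators a_1 < ⋯ < a_k, let A = a_1 + ⋯ + a_k, g_i = gcd{a_j : j ≠ i}, S_i = ⟨a_j/g_i : j ≠ i⟩, and fix a_i' ∈ ℤ with a_i' a_i ≡ 1 (mod g_i). Then for each i = 1,…,k there exists B_i ∈ ℤ (one may take B_i = g_i(F(S_i)+1)/a_i) such that for every x ∈ S: [x/A + a_k, x/a_i − B_i] ∩ (g_iℤ + a_i' x) ⊆ 𝓛_∞(x,i) ⊆ g_iℤ + a_i' x. -/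
open Finset

/-- `Zfac a x`: the set of factorizations of `x` with respect to the generators `a`. -/
def Zfac {k : ℕ} (a : Fin k → ℕ) (x : ℕ) : Set (Fin k → ℕ) :=
  {z | ∑ j, z j * a j = x}

/-- The `∞`-length of a factorization: the maximum coordinate. -/
def linf {k : ℕ} (z : Fin k → ℕ) : ℕ :=
  Finset.univ.sup z

/-- The `0`-length of a factorization: the size of its support. -/
def lzero {k : ℕ} (z : Fin k → ℕ) : ℕ :=
  (Finset.univ.filter fun i => z i ≠ 0).card

/-- `𝓛∞(x)`: the set of `∞`-lengths of factorizations of `x`. -/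
def LinfSet {k : ℕ} (a : Fin k → ℕ) (x : ℕ) : Set ℕ :=
  linf '' Zfac a x

/-- `𝓛∞(x, i)`: `∞`-lengths of factorizations whose maximum coordinate is attained at `i`. -/
def LinfSetI {k : ℕ} (a : Fin k → ℕ) (x : ℕ) (i : Fin k) : Set ℕ :=
  linf '' {z | z ∈ Zfac a x ∧ z i = linf z}

/-- `𝓛₀(x)`: the set of `0`-lengths of factorizations of `x`. -/
def LzeroSet {k : ℕ} (a : Fin k → ℕ) (x : ℕ) : Set ℕ :=
  lzero '' Zfac a x

/-- The set of differences between consecutive elements of a set `T ⊆ ℕ`. -/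
def deltaSet (T : Set ℕ) : Set ℕ :=
  {d | ∃ u ∈ T, ∃ v ∈ T, u < v ∧ v - u = d ∧ ∀ t ∈ T, ¬(u < t ∧ t < v)}

/-- `Δ∞(x)`. -/
def DeltaInf {k : ℕ} (a : Fin k → ℕ) (x : ℕ) : Set ℕ := deltaSet (LinfSet a x)

/-- `Δ∞(S) = ⋃ x ∈ S, Δ∞(x)` (for `x ∉ S` the contribution is empty). -/
def DeltaInfS {k : ℕ} (a : Fin k → ℕ) : Set ℕ := ⋃ x : ℕ, DeltaInf a x

/-- `Δ₀(x)`. -/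
def DeltaZero {k : ℕ} (a : Fin k → ℕ) (x : ℕ) : Set ℕ := deltaSet (LzeroSet a x)

/-- `Δ₀(S) = ⋃ x ∈ S, Δ₀(x)` (for `x ∉ S` the contribution is empty). -/
def DeltaZeroS {k : ℕ} (a : Fin k → ℕ) : Set ℕ := ⋃ x : ℕ, DeltaZero a x

/-- `a` is a system of minimal generators: no generator is a `ℕ`-combination of the others. -/
def MinimalGens {k : ℕ} (a : Fin k → ℕ) : Prop :=
  ∀ i : Fin k, ¬ ∃ z : Fin k → ℕ, z i = 0 ∧ ∑ j, z j * a j = a i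

/-!
Write `x = ℓ * a i + y`. Since `a'` inverts `a i` modulo `g`, the condition `ℓ ≡ a' * x` modulo `g`
says exactly that `g ∣ y`, which holds whenever `y` is a combination of the generators other than
`a i`. Conversely, the multiples of `g` that are not such combinations are bounded, which is where
`B` comes from, so for `ℓ ≤ x / a i - B` some factorization of `x` has `i`-th coordinate `ℓ`.

It remains to bring the other coordinates of such a factorization `z` down to at most `ℓ`. Let `M`
bound all the generators. Since `x / A + M ≤ ℓ`, averaging gives a coordinate with `z m + M ≤ ℓ`.
If some `z j > ℓ`, exchanging `a m` copies of `a j` for `a j` copies of `a m` preserves `x`, keeps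
coordinate `m` at most `ℓ`, and lowers `∑ j, (z j - ℓ)`; coordinate `i`, being equal to `ℓ`, is
never involved.
-/

open Matrix

section Trade

variable {ι : Type*}

/-- The total amount by which the coordinates of `z` exceed the bound `ℓ`; a coordinate at most `ℓ`
contributes `0` by truncated subtraction. -/
def excess [Fintype ι] (ℓ : ℕ) (z : ι → ℕ) : ℕ :=
  ∑ j, (z j - ℓ)

variable [DecidableEq ι]

/-- The exchange of `a m` copies of the generator `a j` for `a j` copies of the generator `a m`.
It is only meaningful when `a m ≤ z j`, because the subtraction is truncated. -/
def trade (a z : ι → ℕ) (j m : ι) : ι → ℕ :=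
  z - Pi.single j (a m) + Pi.single m (a j)

theorem trade_apply_of_ne {a z : ι → ℕ} {j m t : ι} (hj : t ≠ j) (hm : t ≠ m) :
    trade a z j m t = z t := by
  simp [trade, hj, hm]

variable [Fintype ι]

theorem trade_dotProduct {a z : ι → ℕ} {j m : ι} (h : a m ≤ z j) :
    trade a z j m ⬝ᵥ a = z ⬝ᵥ a := by
  have hsingle : Pi.single j (a m) ≤ z := update_le_iff.2 ⟨h, fun _ _ ↦ Nat.zero_le _⟩
  calc trade a z j m ⬝ᵥ a
      = (z - Pi.single j (a m) + Pi.single j (a m)) ⬝ᵥ a := by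
        simp only [trade, add_dotProduct, single_dotProduct, mul_comm]
    _ = z ⬝ᵥ a := by rw [tsub_add_cancel_of_le hsingle]

theorem excess_trade_lt {a z : ι → ℕ} {ℓ : ℕ} {j m : ι} (hpos : 0 < a m) (hj : ℓ < z j)
    (hm : z m + a j ≤ ℓ) : excess ℓ (trade a z j m) < excess ℓ z := by
  have hjm : j ≠ m := by rintro rfl; omega
  refine sum_lt_sum (fun t _ ↦ ?_) ⟨j, mem_univ j, ?_⟩
  · obtain rfl | htm := eq_or_ne t m
    · have : trade a z j t t ≤ ℓ := by simpa [trade, hjm.symm] using hm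
      omega
    · have : trade a z j m t ≤ z t := by simp [trade, htm]
      omega
  · have : trade a z j m j = z j - a m := by simp [trade, hjm]
    omega

end Trade

section Balance

variable {ι : Type*} [Fintype ι] {a : ι → ℕ}

theorem exists_add_le_of_dotProduct_add_le [Nonempty ι] (hpos : ∀ j, 0 < a j) {z : ι → ℕ}
    {ℓ M : ℕ} (h : z ⬝ᵥ a + (∑ j, a j) * M ≤ (∑ j, a j) * ℓ) : ∃ m, z m + M ≤ ℓ := by
  have hsum : ∑ j, (z j + M) * a j ≤ ∑ j, ℓ * a j := by
    simpa only [add_mul, sum_add_distrib, ← mul_sum, mul_comm (∑ j, a j), dotProduct] using h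
  obtain ⟨m, -, hm⟩ := exists_le_of_sum_le univ_nonempty hsum
  exact ⟨m, Nat.le_of_mul_le_mul_right hm (hpos m)⟩

theorem exists_dotProduct_eq_forall_le (hpos : ∀ j, 0 < a j) {M : ℕ} (hM : ∀ j, a j ≤ M)
    {ℓ : ℕ} (z : ι → ℕ) (h : z ⬝ᵥ a + (∑ j, a j) * M ≤ (∑ j, a j) * ℓ) :
    ∃ w : ι → ℕ, w ⬝ᵥ a = z ⬝ᵥ a ∧ (∀ j, w j ≤ ℓ) ∧ ∀ j, z j = ℓ → w j = ℓ := by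
  classical
  induction hn : excess ℓ z using Nat.strong_induction_on generalizing z with
  | _ n ih =>
    by_cases hle : ∀ j, z j ≤ ℓ
    · exact ⟨z, rfl, hle, fun _ hj ↦ hj⟩
    obtain ⟨j, hj⟩ := not_forall.1 hle
    have : Nonempty ι := ⟨j⟩
    obtain ⟨m, hm⟩ := exists_add_le_of_dotProduct_add_le hpos h
    have hroom : z m + a j ≤ ℓ := (Nat.add_le_add_left (hM j) _).trans hm
    have hlow : z m < ℓ := (Nat.lt_add_of_pos_right (hpos j)).trans_le hroom
    have hstock : a m ≤ z j := by have := hM m; omega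
    have htrade : trade a z j m ⬝ᵥ a = z ⬝ᵥ a := trade_dotProduct hstock
    have hlt : excess ℓ (trade a z j m) < n :=
      hn ▸ excess_trade_lt (hpos m) (not_le.1 hj) hroom
    obtain ⟨w, hwa, hwℓ, hfix⟩ := ih _ hlt _ (htrade ▸ h) rfl
    refine ⟨w, hwa.trans htrade, hwℓ, fun t ht ↦ hfix t ?_⟩
    rwa [trade_apply_of_ne (by rintro rfl; omega) (by rintro rfl; omega)]

end Balance

theorem exists_forall_ge_exists_sum_mul_eq_of_gcd_dvd {ι : Type*} (s : Finset ι) (a : ι → ℕ) :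
    ∃ N, ∀ y ≥ N, s.gcd a ∣ y → ∃ c : ι → ℕ, ∑ j ∈ s, c j * a j = y := by
  obtain ⟨N, hN⟩ := Nat.exists_mem_closure_of_ge (a '' s)
  refine ⟨N, fun y hy hdvd ↦ ?_⟩
  have hgcd : Nat.setGcd (a '' s) ∣ s.gcd a :=
    dvd_gcd fun j hj ↦ Nat.setGcd_dvd_of_mem (Set.mem_image_of_mem a hj)
  have hspan : y ∈ Submodule.span ℕ (a '' s) :=
    (Submodule.span_nat_eq_addSubmonoidClosure _).ge (hN y hy (hgcd.trans hdvd))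
  exact (Submodule.mem_span_image_finset_iff_exists_fun' ℕ).1 hspan

theorem dvd_iff_dvd_sub_mul_of_dvd_mul_sub_one {R : Type*} [CommRing R] {g a' b ℓ x y : R}
    (h : g ∣ a' * b - 1) (hx : x = ℓ * b + y) : g ∣ y ↔ g ∣ ℓ - a' * x := by
  constructor <;> intro hdvd
  · have : ℓ - a' * x = -ℓ * (a' * b - 1) - a' * y := by rw [hx]; ring
    exact this ▸ dvd_sub (h.mul_left _) (hdvd.mul_left _)
  · have : y = -b * (ℓ - a' * x) - x * (a' * b - 1) := by linear_combination -hx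
    exact this ▸ dvd_sub (hdvd.mul_left _) (h.mul_left _)

theorem MinimalGens.pos {k : ℕ} {a : Fin k → ℕ} (h : MinimalGens a) (j : Fin k) : 0 < a j := by
  refine Nat.pos_of_ne_zero fun hj ↦ h j ⟨0, rfl, ?_⟩
  simp [hj]

section LinfSetI

variable {k : ℕ} {a : Fin k → ℕ} {x ℓ : ℕ} {i : Fin k}

theorem mem_LinfSetI_iff :
    ℓ ∈ LinfSetI a x i ↔ ∃ z : Fin k → ℕ, z ⬝ᵥ a = x ∧ z i = ℓ ∧ ∀ j, z j ≤ ℓ := by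
  constructor
  · rintro ⟨z, ⟨hz, hzi⟩, rfl⟩
    exact ⟨z, hz, hzi, fun j ↦ le_sup (mem_univ j)⟩
  · rintro ⟨z, hz, rfl, hle⟩
    have hlinf : linf z = z i := le_antisymm (Finset.sup_le fun j _ ↦ hle j) (le_sup (mem_univ i))
    exact ⟨z, ⟨hz, hlinf.symm⟩, hlinf⟩

theorem dvd_sub_mul_of_mem_LinfSetI {g : ℕ} (hg : ∀ j ≠ i, g ∣ a j) {a' : ℤ}
    (ha' : (g : ℤ) ∣ a' * (a i : ℤ) - 1) (hℓ : ℓ ∈ LinfSetI a x i) :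
    (g : ℤ) ∣ (ℓ : ℤ) - a' * (x : ℤ) := by
  obtain ⟨z, rfl, rfl, -⟩ := mem_LinfSetI_iff.1 hℓ
  have hsplit : z ⬝ᵥ a = z i * a i + ∑ j ∈ univ.erase i, z j * a j :=
    (add_sum_erase univ (fun j ↦ z j * a j) (mem_univ i)).symm
  have hdvd : g ∣ ∑ j ∈ univ.erase i, z j * a j :=
    dvd_sum fun j hj ↦ (hg j (ne_of_mem_erase hj)).mul_left _
  refine (dvd_iff_dvd_sub_mul_of_dvd_mul_sub_one ha' ?_).1 (Int.natCast_dvd_natCast.2 hdvd)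
  exact_mod_cast hsplit

theorem mem_LinfSetI_of_eq_mul_add_sum (hpos : ∀ j, 0 < a j) {M : ℕ} (hM : ∀ j, a j ≤ M)
    (hℓ : x + (∑ j, a j) * M ≤ (∑ j, a j) * ℓ) {c : Fin k → ℕ}
    (hx : x = ℓ * a i + ∑ j ∈ univ.erase i, c j * a j) : ℓ ∈ LinfSetI a x i := by
  have hupdate : Function.update c i ℓ ⬝ᵥ a = x := by
    rw [hx, dotProduct, ← add_sum_erase _ _ (mem_univ i), Function.update_self]
    congr 1
    exact sum_congr rfl fun j hj ↦ by rw [Function.update_of_ne (ne_of_mem_erase hj)]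
  obtain ⟨w, hwa, hwℓ, hfix⟩ :=
    exists_dotProduct_eq_forall_le hpos hM (Function.update c i ℓ) (hupdate.symm ▸ hℓ)
  exact mem_LinfSetI_iff.2 ⟨w, hwa.trans hupdate, hfix i (Function.update_self ..), hwℓ⟩

end LinfSetI

theorem stmt_2_general {k : ℕ} {a : Fin k → ℕ} (hpos : ∀ j, 0 < a j) {M : ℕ}
    (hM : ∀ j, a j ≤ M) {A : ℕ} (hA : A = ∑ j, a j) {i : Fin k} {g : ℕ}
    (hg : g = (univ.erase i).gcd a) {a' : ℤ} (ha' : (g : ℤ) ∣ a' * (a i : ℤ) - 1) :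
    ∃ B : ℤ, ∀ x : ℕ,
      (∀ ℓ : ℕ,
          ((x : ℚ) / (A : ℚ) + (M : ℚ) ≤ (ℓ : ℚ) ∧
            (ℓ : ℚ) ≤ (x : ℚ) / (a i : ℚ) - (B : ℚ) ∧
            (g : ℤ) ∣ (ℓ : ℤ) - a' * (x : ℤ)) →
          ℓ ∈ LinfSetI a x i) ∧
      ∀ ℓ ∈ LinfSetI a x i, (g : ℤ) ∣ (ℓ : ℤ) - a' * (x : ℤ) := by
  obtain ⟨N, hN⟩ := exists_forall_ge_exists_sum_mul_eq_of_gcd_dvd (univ.erase i) a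
  rw [← hg] at hN
  have hgdvd : ∀ j ≠ i, g ∣ a j := fun j hj ↦ hg ▸ gcd_dvd (mem_erase.2 ⟨hj, mem_univ j⟩)
  -- With `N = g * (F(S_i) + 1)` this is `g * (F(S_i) + 1) / a i` rounded up to an integer.
  refine ⟨⌈(N : ℚ) / a i⌉, fun x ↦ ⟨?_, fun ℓ ↦ dvd_sub_mul_of_mem_LinfSetI hgdvd ha'⟩⟩
  rintro ℓ ⟨hlower, hupper, hcongr⟩
  have hApos : (0 : ℚ) < A := mod_cast hA ▸ sum_pos (fun j _ ↦ hpos j) ⟨i, mem_univ i⟩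
  have hlower' : x + A * M ≤ A * ℓ := by
    rw [div_add' _ _ _ hApos.ne', div_le_iff₀' hApos, mul_comm (M : ℚ)] at hlower
    exact_mod_cast hlower
  have hupper' : ℓ * a i + N ≤ x := by
    have haipos : (0 : ℚ) < a i := mod_cast hpos i
    have hdiv : (ℓ : ℚ) + N / a i ≤ x / a i := by linarith [Int.le_ceil ((N : ℚ) / a i)]
    rw [add_div' _ _ _ haipos.ne', div_le_div_iff_of_pos_right haipos] at hdiv
    exact_mod_cast hdiv
  obtain ⟨y, rfl⟩ := Nat.exists_eq_add_of_le (Nat.le_of_add_right_le hupper')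
  have hdvd : g ∣ y := Int.natCast_dvd_natCast.1 <|
    (dvd_iff_dvd_sub_mul_of_dvd_mul_sub_one ha' (by push_cast; rfl)).2 hcongr
  obtain ⟨c, rfl⟩ := hN y (by omega) hdvd
  exact mem_LinfSetI_of_eq_mul_add_sum hpos hM (hA ▸ hlower') rfl

/-- Theorem (Atlantis): for each `i` there is `B_i ∈ ℤ` with
`[x/A + a_k, x/a_i − B_i] ∩ (g_iℤ + a_i'x) ⊆ 𝓛∞(x,i) ⊆ g_iℤ + a_i'x` for all `x ∈ S`. -/
theorem stmt_2 (k : ℕ) (hk : 2 ≤ k) (a : Fin k → ℕ)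
    (hmono : StrictMono a)
    (hgcd : Finset.univ.gcd a = 1)
    (hmin : MinimalGens a)
    (A : ℕ) (hA : A = ∑ i, a i)
    (i : Fin k) (g : ℕ) (hg : g = (Finset.univ.erase i).gcd a)
    (a' : ℤ) (ha' : (g : ℤ) ∣ (a' * (a i : ℤ) - 1)) :
    ∃ B : ℤ, ∀ x : ℕ, (Zfac a x).Nonempty →
      (∀ ℓ : ℕ,
          ((x : ℚ) / (A : ℚ) + (a ⟨k - 1, by omega⟩ : ℚ) ≤ (ℓ : ℚ) ∧
            (ℓ : ℚ) ≤ (x : ℚ) / (a i : ℚ) - (B : ℚ) ∧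
            (g : ℤ) ∣ ((ℓ : ℤ) - a' * (x : ℤ))) →
          ℓ ∈ LinfSetI a x i) ∧
      (∀ ℓ ∈ LinfSetI a x i, (g : ℤ) ∣ ((ℓ : ℤ) - a' * (x : ℤ))) := by
  have hM : ∀ j, a j ≤ a ⟨k - 1, by omega⟩ := fun j ↦ hmono.monotone (Nat.le_sub_one_of_lt j.isLt)
  exact (stmt_2_general hmin.pos hM hA hg ha').imp fun B hB x _ ↦ hB x
end

section
/- Let S = ⟨a, a + d, a + 2d, …, a + kd⟩ with d ≥ 1, 2 ≤ k < a, and gcd(a, d) = 1, and write a − 1 = qk + r with q, r ∈ ℤ_{≥0} and 0 ≤ r < k. Then Δ_∞(S) = {1, 2, …, q + d + 1}. -/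
open Finset

/-!
Among the generators `a + i * d`, a factorization `z` of length `n = ∑ zᵢ` and weight `m = ∑ i * zᵢ`
represents `n * a + m * d`, so by coprimality two factorizations of the same element are related by
`(n, m) ↦ (n - t * d, m + t * a)`.

For the upper bound, any two factorizations of an element are joined by a chain in which no
coordinate changes by more than `q + d + 1`; hence no `∞`-length gap is larger. For fixed `(n, m)`
one exchanges `s + i = s' + i'` among two generators, moving all but one of them to the ends of the
progression. Passing from `(n, m)` to `(n - d, m + a)` then turns `q + d` or `q + d + 1` copies of
`a` into `q` or `q + 1` copies of `a + k * d`, up to one further generator on each side.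

For the lower bound, take an element whose factorizations of large `∞`-length have their maximum at
`a`. The multiplicity of `a` is at least `n - m`, which grows with `n`, and at most `n - ⌈m / k⌉`,
which decreases as `n` does. So the values between the upper bound for `(n - d, m + a)` and the
lower bound for `(n, m)` are never attained, and `m` can be chosen to give this hole any size from
`1` to `q + d + 1`.
-/

section Linf

variable {k M B : ℕ} {z w : Fin k → ℕ}

lemma apply_le_linf (z : Fin k → ℕ) (i : Fin k) : z i ≤ linf z :=
  Finset.le_sup (f := z) (Finset.mem_univ i)

lemma linf_le_max (i₀ : Fin k) (h : ∀ i, i ≠ i₀ → z i ≤ M) : linf z ≤ max (z i₀) M := by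
  refine Finset.sup_le fun i _ => ?_
  rcases eq_or_ne i i₀ with rfl | hi
  · exact le_max_left _ _
  · exact (h i hi).trans (le_max_right _ _)

lemma linf_le_linf_add (h : ∀ i, z i ≤ w i + B) : linf z ≤ linf w + B :=
  Finset.sup_le fun i _ => (h i).trans (Nat.add_le_add_right (apply_le_linf w i) B)

lemma apply_le_of_dotProduct_le {g : Fin k → ℕ} {b : ℕ} {i : Fin k} (hb : 0 < b) (hi : b ≤ g i)
    (h : z ⬝ᵥ g ≤ M * b) : z i ≤ M := by
  have hterm : z i * g i ≤ z ⬝ᵥ g :=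
    Finset.single_le_sum (f := fun j => z j * g j) (fun _ _ => Nat.zero_le _) (Finset.mem_univ i)
  exact Nat.le_of_mul_le_mul_right ((Nat.mul_le_mul_left _ hi).trans (hterm.trans h)) hb

end Linf

section NearConnected

variable {k B x u v : ℕ} {g z w : Fin k → ℕ}

/-- `z` and `w` are factorizations of the same element with respect to `g`, and they differ by at
most `B` in each coordinate. -/
def NearStep (g : Fin k → ℕ) (B : ℕ) (z w : Fin k → ℕ) : Prop :=
  z ⬝ᵥ g = w ⬝ᵥ g ∧ ∀ i, z i ≤ w i + B ∧ w i ≤ z i + B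

/-- `z` and `w` are linked by a chain of factorizations of the same element, consecutive members
of which differ by at most `B` in each coordinate. -/
def NearConnected (g : Fin k → ℕ) (B : ℕ) : (Fin k → ℕ) → (Fin k → ℕ) → Prop :=
  Relation.EqvGen (NearStep g B)

namespace NearConnected

lemma refl (z : Fin k → ℕ) : NearConnected g B z z := Relation.EqvGen.refl z

lemma symm (h : NearConnected g B z w) : NearConnected g B w z := Relation.EqvGen.symm _ _ h

lemma trans {y : Fin k → ℕ} (h : NearConnected g B z w) (h' : NearConnected g B w y) :
    NearConnected g B z y := Relation.EqvGen.trans _ _ _ h h'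

lemma of_apply_le (hval : z ⬝ᵥ g = w ⬝ᵥ g) (hz : ∀ i, z i ≤ B) (hw : ∀ i, w i ≤ B) :
    NearConnected g B z w :=
  Relation.EqvGen.rel _ _
    ⟨hval, fun i => ⟨(hz i).trans (Nat.le_add_left _ _), (hw i).trans (Nat.le_add_left _ _)⟩⟩

lemma add_left (e : Fin k → ℕ) (h : NearConnected g B z w) :
    NearConnected g B (e + z) (e + w) := by
  induction h with
  | rel z w h =>
    refine Relation.EqvGen.rel _ _ ⟨by simp only [add_dotProduct, h.1], fun i => ?_⟩
    have := h.2 i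
    simp only [Pi.add_apply]
    omega
  | refl => exact .refl _
  | symm _ _ _ ih => exact ih.symm
  | trans _ _ _ _ _ ih₁ ih₂ => exact ih₁.trans ih₂

lemma dotProduct_eq (h : NearConnected g B z w) : z ⬝ᵥ g = w ⬝ᵥ g := by
  induction h with
  | rel _ _ h => exact h.1
  | refl => rfl
  | symm _ _ _ ih => exact ih.symm
  | trans _ _ _ _ _ ih₁ ih₂ => exact ih₁.trans ih₂

lemma linf_le_iff (h : NearConnected g B z w) (hz : z ∈ Zfac g x) (huv : u + B < v)
    (hgap : ∀ t ∈ LinfSet g x, ¬(u < t ∧ t < v)) : linf z ≤ u ↔ linf w ≤ u := by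
  induction h with
  | rel z w h =>
    have hzw := linf_le_linf_add fun i => (h.2 i).1
    have hwz := linf_le_linf_add fun i => (h.2 i).2
    have hgz := hgap _ ⟨z, hz, rfl⟩
    have hgw := hgap _ ⟨w, h.1.symm.trans hz, rfl⟩
    omega
  | refl => rfl
  | symm w z h ih => exact (ih ((dotProduct_eq h).trans hz)).symm
  | trans _ _ _ h _ ih₁ ih₂ => exact (ih₁ hz).trans (ih₂ ((dotProduct_eq h).symm.trans hz))

end NearConnected

lemma le_of_mem_DeltaInf {c : ℕ}
    (hconn : ∀ z ∈ Zfac g x, ∀ w ∈ Zfac g x, NearConnected g B z w) (hc : c ∈ DeltaInf g x) :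
    c ≤ B := by
  obtain ⟨_, ⟨z, hz, rfl⟩, _, ⟨w, hw, rfl⟩, hlt, rfl, hgap⟩ := hc
  by_contra! hB
  have := ((hconn z hz w hw).linf_le_iff hz (by omega) hgap).1 le_rfl
  omega

end NearConnected

section LengthWeight

variable {k : ℕ}

/-- The (ordinary) length of a factorization: the number of generators used. -/
def factLength (z : Fin k → ℕ) : ℕ := ∑ i, z i

/-- The weight of a factorization: the sum of the (zero-based) indices of the generators used. -/
def factWeight (z : Fin k → ℕ) : ℕ := z ⬝ᵥ fun i => (i : ℕ)

/-- The generators `a, a + d, …, a + kd`. -/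
def arithGens (a d k : ℕ) : Fin (k + 1) → ℕ := fun i => a + i * d

@[simp] lemma factLength_add (z w : Fin k → ℕ) :
    factLength (z + w) = factLength z + factLength w := Finset.sum_add_distrib

@[simp] lemma factLength_single (i : Fin k) (c : ℕ) : factLength (Pi.single i c) = c := by
  simp [factLength]

@[simp] lemma factWeight_add (z w : Fin k → ℕ) :
    factWeight (z + w) = factWeight z + factWeight w := add_dotProduct _ _ _

@[simp] lemma factWeight_single (i : Fin k) (c : ℕ) : factWeight (Pi.single i c) = c * i :=
  single_dotProduct _ _ _

lemma factLength_eq_zero {z : Fin k → ℕ} : factLength z = 0 ↔ z = 0 := by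
  simp [factLength, funext_iff]

lemma exists_eq_add_single_of_factLength_eq_succ {z : Fin k → ℕ} {n : ℕ}
    (hz : factLength z = n + 1) : ∃ w i, factLength w = n ∧ z = w + Pi.single i 1 := by
  obtain ⟨i, hi⟩ : ∃ i, z i ≠ 0 := by
    by_contra! h
    simp [factLength, h] at hz
  have hle : Pi.single i 1 ≤ z := by
    simpa [Pi.single, update_le_iff] using Nat.one_le_iff_ne_zero.2 hi
  have heq : z = z - Pi.single i 1 + Pi.single i 1 := (tsub_add_cancel_of_le hle).symm
  refine ⟨z - Pi.single i 1, i, ?_, heq⟩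
  rw [heq, factLength_add, factLength_single] at hz
  omega

lemma dotProduct_arithGens (a d : ℕ) (z : Fin (k + 1) → ℕ) :
    z ⬝ᵥ arithGens a d k = factLength z * a + factWeight z * d := by
  simp only [dotProduct, arithGens, factLength, factWeight, Finset.sum_mul,
    ← Finset.sum_add_distrib]
  exact Finset.sum_congr rfl fun i _ => by ring

lemma factLength_le_apply_zero_add_factWeight (z : Fin (k + 1) → ℕ) :
    factLength z ≤ z 0 + factWeight z := by
  simp only [factLength, factWeight, dotProduct, Fin.sum_univ_succ, Fin.val_zero, mul_zero,
    zero_add]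
  gcongr with i
  exact Nat.le_mul_of_pos_right _ (Fin.succ_pos i)

lemma factWeight_add_mul_apply_zero_le (z : Fin (k + 1) → ℕ) :
    factWeight z + k * z 0 ≤ k * factLength z := by
  have htail : ∑ i : Fin k, z i.succ * (i.succ : ℕ) ≤ k * ∑ i : Fin k, z i.succ := by
    rw [mul_comm, Finset.sum_mul]
    gcongr with i
    exact i.succ.is_le
  simp only [factLength, factWeight, dotProduct, Fin.sum_univ_succ, Fin.val_zero, mul_zero,
    zero_add, mul_add]
  omega

end LengthWeight

lemma add_le_and_add_le_of_coprime_of_lt {a d n n' m m' : ℕ} (hd : 0 < d)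
    (hcop : a.Coprime d) (hlt : n' < n) (h : n * a + m * d = n' * a + m' * d) :
    n' + d ≤ n ∧ m + a ≤ m' := by
  obtain ⟨e, rfl⟩ := Nat.exists_eq_add_of_le hlt.le
  have hval : e * a + m * d = m' * d := by linarith
  have hdvd : d ∣ e * a := (Nat.dvd_add_left (Dvd.intro_left m rfl)).1 ⟨m', by rw [hval, mul_comm]⟩
  obtain ⟨t, rfl⟩ := hcop.symm.dvd_of_dvd_mul_right hdvd
  have ht : 1 ≤ t := by
    by_contra! h0
    simp [Nat.lt_one_iff.1 h0] at hlt
  have hm' : m + a * t = m' := Nat.eq_of_mul_eq_mul_right hd (by linarith)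
  exact ⟨by gcongr; exact Nat.le_mul_of_pos_right d ht,
    hm' ▸ by gcongr; exact Nat.le_mul_of_pos_right a ht⟩

section Packed

variable {k : ℕ}

/-- The factorization of length `A + p + 1` using `A` copies of the first generator, `p` copies of
the last one and one further generator, of index `s`. Allowing `s` to be `0` or `k` makes this a
normal form for all nonzero factorizations of given length and weight. -/
def packed (A : ℕ) (s : Fin (k + 1)) (p : ℕ) : Fin (k + 1) → ℕ :=
  Pi.single 0 A + Pi.single (Fin.last k) p + Pi.single s 1

@[simp] lemma factLength_packed (A : ℕ) (s : Fin (k + 1)) (p : ℕ) :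
    factLength (packed A s p) = A + p + 1 := by
  simp [packed]

@[simp] lemma factWeight_packed (A : ℕ) (s : Fin (k + 1)) (p : ℕ) :
    factWeight (packed A s p) = s + k * p := by
  simp only [packed, factWeight_add, factWeight_single, Fin.val_zero, Fin.val_last]
  ring

lemma packed_apply_zero {A : ℕ} {s : Fin (k + 1)} {p : ℕ} (hk : 0 < k) (hs : s ≠ 0) :
    packed A s p 0 = A := by
  have hlast : 0 ≠ Fin.last k := Fin.ne_of_lt (Fin.lt_def.2 hk)
  simp [packed, hs.symm, hlast]

lemma packed_add_add (A A' : ℕ) (s : Fin (k + 1)) (p p' : ℕ) :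
    packed (A + A') s (p + p') = Pi.single 0 A + Pi.single (Fin.last k) p + packed A' s p' := by
  simp only [packed, Pi.single_add]
  abel

lemma packed_zero_succ (A p : ℕ) :
    packed (k := k) A 0 (p + 1) = packed (A + 1) (Fin.last k) p := by
  simp only [packed, Pi.single_add]
  abel

lemma packed_congr {A A' p p' : ℕ} {s s' : Fin (k + 1)} (hk : 0 < k)
    (hlen : A + p = A' + p') (hwt : s + k * p = s' + k * p') : packed A s p = packed A' s' p' := by
  wlog hpp : p ≤ p' generalizing A A' p p' s s'
  · exact (this hlen.symm hwt.symm (le_of_not_ge hpp)).symm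
  obtain ⟨e, rfl⟩ := Nat.exists_eq_add_of_le hpp
  have hs : (s : ℕ) = s' + k * e := by linarith
  have he : e ≤ 1 := Nat.le_of_mul_le_mul_left (by have := s.is_le; omega) hk
  interval_cases e
  · obtain rfl : s = s' := Fin.ext (by simpa using hs)
    obtain rfl : A = A' := by omega
    rfl
  · obtain rfl : s' = 0 := Fin.ext (by have := s.is_le; rw [Fin.val_zero]; omega)
    obtain rfl : s = Fin.last k := Fin.ext (by simpa using hs)
    obtain rfl : A = A' + 1 := by omega
    exact (packed_zero_succ A' p).symm

end Packed

section Connectivity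

variable {k a d B : ℕ}

lemma nearConnected_single_add_single {s i s' i' : Fin (k + 1)} (hB : 2 ≤ B)
    (h : (s : ℕ) + i = s' + i') :
    NearConnected (arithGens a d k) B (Pi.single s 1 + Pi.single i 1)
      (Pi.single s' 1 + Pi.single i' 1) := by
  have hle (u v j : Fin (k + 1)) : (Pi.single u 1 + Pi.single v 1 : Fin (k + 1) → ℕ) j ≤ B := by
    simp only [Pi.add_apply, Pi.single_apply]
    split_ifs <;> omega
  refine .of_apply_le ?_ (hle s i) (hle s' i')
  rw [dotProduct_arithGens, dotProduct_arithGens]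
  simp [h]

lemma exists_nearConnected_packed_add_single (hB : 2 ≤ B) (A : ℕ) (s : Fin (k + 1)) (p : ℕ)
    (i : Fin (k + 1)) :
    ∃ A' p', ∃ s' : Fin (k + 1), A' + p' = A + p + 1 ∧ s' + k * p' = s + k * p + i ∧
      NearConnected (arithGens a d k) B (packed A s p + Pi.single i 1) (packed A' s' p') := by
  have hsplit : packed A s p + Pi.single i 1 =
      Pi.single 0 A + Pi.single (Fin.last k) p + (Pi.single s 1 + Pi.single i 1) := add_assoc _ _ _
  rw [hsplit]
  rcases le_or_gt (s + i : ℕ) k with hsi | hsi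
  · refine ⟨A + 1, p, ⟨s + i, by omega⟩, by omega, by simp only; omega, ?_⟩
    rw [show packed (A + 1) _ p = _ from packed_add_add A 1 _ p 0]
    refine NearConnected.add_left _ ?_
    simpa [packed] using nearConnected_single_add_single hB (by simp)
  · refine ⟨A, p + 1, ⟨s + i - k, by omega⟩, by omega, by simp only [mul_add]; omega, ?_⟩
    rw [show packed A _ (p + 1) = _ from packed_add_add A 0 _ p 1]
    refine NearConnected.add_left _ ?_
    simpa [packed] using nearConnected_single_add_single hB (by simp; omega)

lemma exists_nearConnected_packed (hB : 2 ≤ B) {z : Fin (k + 1) → ℕ} {n : ℕ}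
    (hz : factLength z = n + 1) : ∃ A p, ∃ s : Fin (k + 1), A + p = n ∧ s + k * p = factWeight z ∧
      NearConnected (arithGens a d k) B z (packed A s p) := by
  induction n generalizing z with
  | zero =>
    obtain ⟨w, i, hw, rfl⟩ := exists_eq_add_single_of_factLength_eq_succ hz
    obtain rfl := factLength_eq_zero.1 hw
    refine ⟨0, 0, i, rfl, by simp [factWeight], ?_⟩
    simpa [packed] using NearConnected.refl _
  | succ n ih =>
    obtain ⟨w, i, hw, rfl⟩ := exists_eq_add_single_of_factLength_eq_succ hz
    obtain ⟨A, p, s, hlen, hwt, hconn⟩ := ih hw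
    obtain ⟨A', p', s', hlen', hwt', hconn'⟩ :=
      exists_nearConnected_packed_add_single (a := a) (d := d) hB A s p i
    refine ⟨A', p', s', by omega, by simp [hwt', hwt], .trans ?_ hconn'⟩
    simpa only [add_comm _ (Pi.single i 1)] using hconn.add_left (Pi.single i 1)

lemma nearConnected_of_factLength_eq_of_factWeight_eq (hk : 0 < k) (hB : 2 ≤ B)
    {z w : Fin (k + 1) → ℕ} (hlen : factLength z = factLength w)
    (hwt : factWeight z = factWeight w) : NearConnected (arithGens a d k) B z w := by
  rcases hz : factLength z with _ | n
  · rw [factLength_eq_zero.1 hz, factLength_eq_zero.1 (hlen.symm.trans hz)]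
    exact .refl 0
  · obtain ⟨A, p, s, hA, hs, hconn⟩ := exists_nearConnected_packed hB hz
    obtain ⟨A', p', s', hA', hs', hconn'⟩ := exists_nearConnected_packed hB (hlen.symm.trans hz)
    rw [packed_congr hk (hA.trans hA'.symm) ((hs.trans hwt).trans hs'.symm)] at hconn
    exact hconn.trans hconn'.symm

lemma nearConnected_packed_of_add_eq {e p : ℕ} {s s' : Fin (k + 1)} (A : ℕ)
    (hB : e + d ≤ B) (hs : s = 0 → e + d < B) (hs' : e < B) (h : s + a = s' + k * e) :
    NearConnected (arithGens a d k) B (packed (A + (e + d)) s p) (packed A s' (p + e)) := by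
  have hmove : NearConnected (arithGens a d k) B (packed (e + d) s 0) (packed 0 s' e) := by
    refine .of_apply_le ?_ (fun j => ?_) fun j => ?_
    · simp only [dotProduct_arithGens, factLength_packed, factWeight_packed, ← h]
      ring
    · simp only [packed, Pi.add_apply, Pi.single_apply]
      split_ifs <;> grind
    · simp only [packed, Pi.add_apply, Pi.single_apply]
      split_ifs <;> omega
  have := hmove.add_left (Pi.single 0 A + Pi.single (Fin.last k) p)
  rwa [← packed_add_add, ← packed_add_add] at this

lemma exists_nearConnected_factLength_add_eq {q r : ℕ} (hd : 0 < d) (ha : a = q * k + r + 1)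
    (hr : r < k) {z : Fin (k + 1) → ℕ} (hz : factWeight z + a + k * d ≤ k * factLength z) :
    ∃ w, NearConnected (arithGens a d k) (q + d + 1) z w ∧ factLength w + d = factLength z := by
  obtain ⟨n, hn⟩ : ∃ n, factLength z = n + 1 := by
    refine Nat.exists_eq_succ_of_ne_zero fun h0 => ?_
    rw [h0] at hz
    omega
  obtain ⟨A, p, s, hlen, hwt, hconn⟩ := exists_nearConnected_packed (B := q + d + 1) (by omega) hn
  have hA (e : ℕ) (he : k * e < s + a) : e + d ≤ A := by
    have hmul : k * (p + e + d) < k * (n + 1) := by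
      rw [hn] at hz
      linarith
    have := Nat.lt_of_mul_lt_mul_left hmul
    omega
  have hlower (e : ℕ) (s' : Fin (k + 1)) (hs' : (s' : ℕ) ≠ 0) (h : s + a = s' + k * e)
      (he : e ≤ q + 1) (hs : s = 0 → e ≤ q) :
      ∃ w, NearConnected (arithGens a d k) (q + d + 1) z w ∧ factLength w + d = factLength z := by
    obtain ⟨A, rfl⟩ := Nat.exists_eq_add_of_le' (hA e (by omega))
    refine ⟨packed A s' (p + e), hconn.trans (nearConnected_packed_of_add_eq A ?_ ?_ ?_ h), ?_⟩
    · omega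
    · intro h0
      have := hs h0
      omega
    · omega
    · rw [factLength_packed, hn]
      omega
  rw [mul_comm q] at ha
  rcases le_or_gt (s + r + 1 : ℕ) k with hsr | hsr
  · exact hlower q ⟨s + r + 1, by omega⟩ (by simp) (by simp only; omega) (by omega) (by simp)
  · refine hlower (q + 1) ⟨s + r + 1 - k, by omega⟩ (by simp only; omega)
      (by simp only [mul_add]; omega) le_rfl ?_
    rintro rfl
    simp only [Fin.val_zero] at hsr
    omega

theorem nearConnected_of_dotProduct_eq {q r : ℕ} (hd : 0 < d) (hcop : a.Coprime d)
    (ha : a = q * k + r + 1) (hr : r < k) {z w : Fin (k + 1) → ℕ}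
    (h : z ⬝ᵥ arithGens a d k = w ⬝ᵥ arithGens a d k) :
    NearConnected (arithGens a d k) (q + d + 1) z w := by
  wlog hle : factLength w ≤ factLength z generalizing z w
  · exact (this h.symm (le_of_not_ge hle)).symm
  induction hn : factLength z using Nat.strong_induction_on generalizing z with
  | _ n ih =>
    subst hn
    have hval := h
    rw [dotProduct_arithGens, dotProduct_arithGens] at hval
    rcases hle.eq_or_lt with hlen | hlt
    · rw [hlen] at hval
      have hwt := Nat.eq_of_mul_eq_mul_right hd (Nat.add_left_cancel hval)
      exact nearConnected_of_factLength_eq_of_factWeight_eq (by omega) (by omega) hlen.symm hwt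
    · obtain ⟨hlen, hwt⟩ := add_le_and_add_le_of_coprime_of_lt hd hcop hlt hval
      have hroom : factWeight z + a + k * d ≤ k * factLength z := by
        have hw := factWeight_add_mul_apply_zero_le w
        have hmul := Nat.mul_le_mul_left k hlen
        rw [mul_add] at hmul
        omega
      obtain ⟨z', hconn, hz'⟩ := exists_nearConnected_factLength_add_eq hd ha hr hroom
      exact hconn.trans (ih _ (by omega) (hconn.dotProduct_eq.symm.trans h) (by omega) rfl)

end Connectivity

section Gaps

variable {k a d : ℕ}

/- Solves for the trade behind a gap of size `c`: `c + j` generators of total index `j`, namely `c`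
of index `0` and `j` of index `1`, against `p + 1` generators of positive index and total index
`j + a`, namely one of index `s` and `p` of index `k`. -/
lemma exists_add_eq_add_mul {q r c : ℕ} (hk : 2 ≤ k) (ha : a = q * k + r + 1)
    (hc : c ≤ q + d + 1) :
    ∃ j s p, 0 < s ∧ s ≤ k ∧ j + a = s + k * p ∧ p + 1 + d = j + c := by
  obtain ⟨e, he⟩ := Nat.exists_eq_add_of_le hc
  obtain ⟨l, rfl⟩ := Nat.exists_eq_add_of_le' hk
  have hdiv := Nat.mod_add_div (r + (l + 2) * e) (l + 1)
  have hmod := Nat.mod_lt (r + (l + 2) * e) l.succ_pos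
  have hej : e ≤ (r + (l + 2) * e) / (l + 1) := by
    rw [Nat.le_div_iff_mul_le l.succ_pos]
    linarith
  generalize (r + (l + 2) * e) / (l + 1) = j at *
  generalize (r + (l + 2) * e) % (l + 1) = s at *
  obtain ⟨f, rfl⟩ := Nat.exists_eq_add_of_le hej
  exact ⟨e + f, s + 1, q + f, s.succ_pos, by omega, by subst ha; linarith, by omega⟩

lemma apply_zero_le_or_le_apply_zero {M c j s p : ℕ} {y : Fin (k + 1) → ℕ} (hd : 0 < d)
    (hcop : a.Coprime d) (hs : 0 < s) (hj : j + a = s + k * p) (hp : p + 1 + d = j + c)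
    (hy : y ⬝ᵥ arithGens a d k = (M + c + j) * a + j * d) : y 0 ≤ M ∨ M + c ≤ y 0 := by
  rw [dotProduct_arithGens] at hy
  rcases lt_or_ge (factLength y) (M + c + j) with hlt | hge
  · obtain ⟨hlen, hwt⟩ := add_le_and_add_le_of_coprime_of_lt hd hcop hlt hy.symm
    have hub := factWeight_add_mul_apply_zero_le y
    have hrest : k * (p + y 0) < k * factLength y := by linarith
    have := Nat.lt_of_mul_lt_mul_left hrest
    omega
  · have hwt : factWeight y ≤ j := by
      refine Nat.le_of_mul_le_mul_right (?_ : factWeight y * d ≤ j * d) hd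
      have := Nat.mul_le_mul_right a hge
      omega
    have := factLength_le_apply_zero_add_factWeight y
    omega

lemma linf_le_max_of_dotProduct_arithGens_le {M : ℕ} {y : Fin (k + 1) → ℕ} (hd : 0 < d)
    (hy : y ⬝ᵥ arithGens a d k ≤ M * (a + d)) : linf y ≤ max (y 0) M := by
  refine linf_le_max 0 fun i hi => ?_
  have hgen : a + d ≤ arithGens a d k i :=
    Nat.add_le_add_left (Nat.le_mul_of_pos_left d (Fin.pos_iff_ne_zero.2 hi)) a
  exact apply_le_of_dotProduct_le (Nat.add_pos_right a hd) hgen hy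

theorem mem_DeltaInfS_arithGens {q r c : ℕ} (hd : 0 < d) (hk : 2 ≤ k) (hcop : a.Coprime d)
    (ha : a = q * k + r + 1) (hc₀ : 0 < c) (hc : c ≤ q + d + 1) :
    c ∈ DeltaInfS (arithGens a d k) := by
  obtain ⟨j, s, p, hs, hsk, hj, hp⟩ := exists_add_eq_add_mul hk ha hc
  -- With `M` this large, only the coordinate of the generator `a` can exceed `M`.
  obtain ⟨M, hM⟩ : ∃ M, M = (c + j) * a + j * d := ⟨_, rfl⟩
  set x := (M + c + j) * a + j * d with hx
  have hxM : x ≤ M * (a + d) := by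
    have hMd : M ≤ M * d := Nat.le_mul_of_pos_right M hd
    linarith
  have hlinf {y : Fin (k + 1) → ℕ} (hy : y ∈ Zfac (arithGens a d k) x) :
      y 0 ≤ linf y ∧ linf y ≤ max (y 0) M :=
    ⟨apply_le_linf y 0, linf_le_max_of_dotProduct_arithGens_le hd ((Eq.le hy).trans hxM)⟩
  let z : Fin (k + 1) → ℕ := packed M ⟨s, by omega⟩ p
  let w : Fin (k + 1) → ℕ := Pi.single 0 (M + c) + Pi.single ⟨1, by omega⟩ j
  have hz : z ∈ Zfac (arithGens a d k) x := by
    refine (dotProduct_arithGens a d z).trans ?_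
    simp only [z, factLength_packed, factWeight_packed, ← hj]
    rw [hx, show M + c + j = M + p + 1 + d by omega]
    ring
  have hw : w ∈ Zfac (arithGens a d k) x := (dotProduct_arithGens a d w).trans (by simp [w, hx])
  have hz₀ : z 0 = M := packed_apply_zero (by omega) (by simpa [Fin.ext_iff] using hs.ne')
  have hw₀ : w 0 = M + c := by simp [w, Fin.ext_iff]
  have hlz := hlinf hz
  have hlw := hlinf hw
  refine Set.mem_iUnion.2 ⟨x, linf z, ⟨z, hz, rfl⟩, linf w, ⟨w, hw, rfl⟩, by omega, by omega, ?_⟩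
  rintro _ ⟨y, hy, rfl⟩ hbetween
  have hly := hlinf hy
  have := apply_zero_le_or_le_apply_zero hd hcop hs hj hp hy
  omega

end Gaps

theorem stmt_10_general (a d k q r : ℕ) (hd : 1 ≤ d) (hk : 2 ≤ k) (hcop : Nat.Coprime a d)
    (ha : a = q * k + r + 1) (hr : r < k) :
    DeltaInfS (fun i : Fin (k + 1) => a + (i : ℕ) * d) = Set.Icc 1 (q + d + 1) := by
  refine Set.Subset.antisymm (Set.iUnion_subset fun x c hc => ?_) fun c hc =>
    mem_DeltaInfS_arithGens hd hk hcop ha hc.1 hc.2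
  have hpos : 1 ≤ c := by
    obtain ⟨u, _, v, _, huv, rfl, _⟩ := hc
    omega
  exact ⟨hpos, le_of_mem_DeltaInf (g := arithGens a d k) (fun z hz w hw =>
    nearConnected_of_dotProduct_eq hd hcop ha hr (Eq.trans hz hw.symm)) hc⟩

/-- For `S = ⟨a, a + d, …, a + kd⟩` with `2 ≤ k < a` and `gcd(a,d) = 1`, writing
`a − 1 = qk + r` with `0 ≤ r < k`, one has `Δ∞(S) = {1, 2, …, q + d + 1}`. -/
theorem stmt_10 (a d k q r : ℕ) (hd : 1 ≤ d) (hk : 2 ≤ k) (hka : k < a)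
    (hcop : Nat.Coprime a d) (hqr : a - 1 = q * k + r) (hr : r < k) :
    DeltaInfS (fun i : Fin (k + 1) => a + (i : ℕ) * d) = Set.Icc 1 (q + d + 1) :=
  stmt_10_general a d k q r hd hk hcop (by omega) hr
end
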